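/- Let l > 0, 0 ≤ α ≤ 1, and ρ₁, ρ₂ ≥ 0. Let u, v : ℝ × [0, ∞) → ℝ be smooth functions, 2l-periodic in x, such that u solves the nonlocal Kuramoto–Sivashinsky equation u_t + u_{xxxx} + u_{xx} + u u_x + α H(u_{xxx}) = 0 and v solves the Kuramoto–Sivashinsky equation v_t + v_{xxxx} + v_{xx} + v v_x = 0, where H is the periodic Hilbert transform acting in x. Suppose that for all t ≥ 0, ‖u_x(·,t)‖ ≤ ρ₁, ‖v_x(·,t)‖ ≤ ρ₁, ‖u_{xx}(·,t)‖ ≤ ρ₂, ‖v_{xx}(·,t)‖ ≤ ρ₂, and ‖w_x(·,t)‖ ≤ ρ₁ where w := u - v. Then with b₁ := 2 + 4 ρ₁^{1/2} ρ₂^{1/2} and b₂ := 2 ρ₁², for all t ≥ 0: d/dt ‖w(·,t)‖² + ‖w_{xx}(·,t)‖² ≤ b₁ ‖w(·,t)‖² + b₂ α². -/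

import Mathlib

/-- `Hf` is the periodic Hilbert transform of the `2l`-periodic function `f`: the `k`-th
Fourier coefficient of `Hf` on `(-l, l)` (w.r.t. the basis `e^{i k π x / l}`) equals
`i·sgn(k)` times that of `f`, where `sgn(0) = 0`. -/
def IsPeriodicHilbertPair (l : ℝ) (hl : 0 < l) (f Hf : ℝ → ℝ) : Prop :=
  ∀ k : ℤ, fourierCoeffOn (show (-l : ℝ) < l by linarith) (fun x => (Hf x : ℂ)) k
    = Complex.I * (Int.sign k : ℂ) *
        fourierCoeffOn (show (-l : ℝ) < l by linarith) (fun x => (f x : ℂ)) k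

/-!
Subtract the two equations and test with `2 w`, where `w = u - v`. The fourth order term yields
`-2 ‖w_xx‖²` and the second order term is at most `2 ‖w‖² + ½ ‖w_xx‖²`. Integration by parts turns
the transport terms into `-½ ∫ w² (u_x + v_x)`. Since `u_x` vanishes somewhere, the fundamental
theorem of calculus for `u_x²` and Cauchy–Schwarz give `|u_x|² ≤ 2 ‖u_x‖ ‖u_xx‖`, and likewise for
`v_x`. In Fourier variables `|⟨w, H u_xxx⟩| ≤ ∑ |k|³ |ŵ_k| |û_k| ≤ ‖w_xx‖ ‖u_x‖` up to
normalization, so the nonlocal term is at most `2 α² ‖u_x‖² + ½ ‖w_xx‖²`.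
-/

open Function MeasureTheory Set
open scoped InnerProductSpace

section ParametricIntegral

variable {E : Type*} [NormedAddCommGroup E] [NormedSpace ℝ E] {F : ℝ → ℝ → E}

lemma hasDerivAt_left_of_contDiff_uncurry (hF : ContDiff ℝ 1 (uncurry F)) (t x : ℝ) :
    HasDerivAt (fun s => F s x) (fderiv ℝ (uncurry F) (t, x) (1, 0)) t := by
  have hline : HasDerivAt (fun s : ℝ => (s, x)) (1, 0) t :=
    (hasDerivAt_id t).prodMk (hasDerivAt_const t x)
  exact (hF.differentiable one_ne_zero (t, x)).hasFDerivAt.comp_hasDerivAt t hline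

lemma continuous_deriv_left_of_contDiff_uncurry (hF : ContDiff ℝ 1 (uncurry F)) :
    Continuous fun p : ℝ × ℝ => deriv (fun s => F s p.2) p.1 := by
  simp_rw [fun p : ℝ × ℝ => (hasDerivAt_left_of_contDiff_uncurry hF p.1 p.2).deriv]
  exact (hF.continuous_fderiv one_ne_zero).clm_apply continuous_const

lemma hasDerivAt_intervalIntegral_of_contDiff_uncurry (hF : ContDiff ℝ 1 (uncurry F))
    (a b t : ℝ) :
    HasDerivAt (fun s => ∫ x in a..b, F s x) (∫ x in a..b, deriv (fun s => F s x) t) t := by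
  have hcont : Continuous (uncurry F) := hF.continuous
  have hcont_deriv := continuous_deriv_left_of_contDiff_uncurry hF
  obtain ⟨C, hC⟩ := ((isCompact_Icc (a := t - 1) (b := t + 1)).prod
    (isCompact_uIcc (a := a) (b := b))).exists_bound_of_continuousOn hcont_deriv.continuousOn
  refine (intervalIntegral.hasDerivAt_integral_of_dominated_loc_of_deriv_le
    (F' := fun s x => deriv (fun r => F r x) s) (bound := fun _ => C)
    (Icc_mem_nhds (sub_one_lt t) (lt_add_one t)) (.of_forall fun s => ?_) ?_ ?_
    (.of_forall fun x hx s hs => hC (s, x) ⟨hs, uIoc_subset_uIcc hx⟩)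
    intervalIntegrable_const (.of_forall fun x _ s _ => ?_)).2
  · exact (hcont.comp (Continuous.prodMk_right s)).aestronglyMeasurable
  · exact (hcont.comp (Continuous.prodMk_right t)).intervalIntegrable a b
  · exact (hcont_deriv.comp (Continuous.prodMk_right t)).aestronglyMeasurable
  · exact (hasDerivAt_left_of_contDiff_uncurry hF s x).differentiableAt.hasDerivAt

lemma deriv_integral_sq_of_contDiff_uncurry {w : ℝ → ℝ → ℝ} (hw : ContDiff ℝ 1 (uncurry w))
    (a b t : ℝ) :
    deriv (fun s => ∫ x in a..b, w s x ^ 2) t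
      = ∫ x in a..b, 2 * w t x * deriv (fun s => w s x) t := by
  rw [(hasDerivAt_intervalIntegral_of_contDiff_uncurry (F := fun s x => w s x ^ 2)
    (hw.pow 2) a b t).deriv]
  refine intervalIntegral.integral_congr fun x _ => ?_
  have hd := (hasDerivAt_left_of_contDiff_uncurry hw t x).differentiableAt
  simpa using deriv_fun_pow hd 2

end ParametricIntegral

section Parseval

variable {a b : ℝ}

lemma memLp_two_restrict_Ioc_of_continuous {E : Type*} [NormedAddCommGroup E] {f : ℝ → E}
    (hf : Continuous f) : MemLp f 2 (volume.restrict (Ioc a b)) :=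
  (memLp_two_iff_integrable_sq_norm hf.aestronglyMeasurable).2 (hf.norm.pow 2).integrableOn_Ioc

lemma fourierCoeffOn_add (hab : a < b) {f g : ℝ → ℂ} (hf : IntervalIntegrable f volume a b)
    (hg : IntervalIntegrable g volume a b) (k : ℤ) :
    fourierCoeffOn hab (f + g) k = fourierCoeffOn hab f k + fourierCoeffOn hab g k := by
  have hcont : Continuous fun x : ℝ => fourier (-k) (x : AddCircle (b - a)) :=
    (map_continuous (fourier (-k))).comp (AddCircle.continuous_mk' _)
  simp only [fourierCoeffOn_eq_integral, Pi.add_apply, smul_add]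
  rw [intervalIntegral.integral_add (hf.continuousOn_smul hcont.continuousOn)
    (hg.continuousOn_smul hcont.continuousOn), smul_add]

lemma hasSum_inner_fourierCoeffOn (hab : a < b) {f g : ℝ → ℂ}
    (hf : MemLp f 2 (volume.restrict (Ioc a b))) (hg : MemLp g 2 (volume.restrict (Ioc a b))) :
    HasSum (fun k => ⟪fourierCoeffOn hab f k, fourierCoeffOn hab g k⟫_ℝ)
      ((b - a)⁻¹ * ∫ x in a..b, ⟪f x, g x⟫_ℝ) := by
  have intervalIntegrable_of_memLp {h : ℝ → ℂ} (hh : MemLp h 2 (volume.restrict (Ioc a b))) :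
      IntervalIntegrable h volume a b :=
    (intervalIntegrable_iff_integrableOn_Ioc_of_le hab.le).2 (hh.integrable one_le_two)
  have sq_intervalIntegrable {h : ℝ → ℂ} (hh : MemLp h 2 (volume.restrict (Ioc a b))) :
      IntervalIntegrable (fun x => ‖h x‖ ^ 2) volume a b :=
    (intervalIntegrable_iff_integrableOn_Ioc_of_le hab.le).2
      ((memLp_two_iff_integrable_sq_norm hh.1).1 hh)
  have polarization (z w : ℂ) : ⟪z, w⟫_ℝ = 2⁻¹ * (‖z + w‖ ^ 2 - ‖z‖ ^ 2 - ‖w‖ ^ 2) := by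
    rw [real_inner_eq_norm_add_mul_self_sub_norm_mul_self_sub_norm_mul_self_div_two]
    ring
  have integral_polarization : (b - a)⁻¹ * ∫ x in a..b, ⟪f x, g x⟫_ℝ
      = 2⁻¹ * ((b - a)⁻¹ • (∫ x in a..b, ‖(f + g) x‖ ^ 2) - (b - a)⁻¹ • (∫ x in a..b, ‖f x‖ ^ 2)
        - (b - a)⁻¹ • ∫ x in a..b, ‖g x‖ ^ 2) := by
    rw [← smul_sub, ← smul_sub, ← intervalIntegral.integral_sub
      (sq_intervalIntegrable (hf.add hg)) (sq_intervalIntegrable hf),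
      ← intervalIntegral.integral_sub
      ((sq_intervalIntegrable (hf.add hg)).sub (sq_intervalIntegrable hf))
      (sq_intervalIntegrable hg), smul_eq_mul, mul_left_comm]
    simp only [polarization, Pi.add_apply, intervalIntegral.integral_const_mul]
  rw [integral_polarization]
  simpa only [polarization, fourierCoeffOn_add hab (intervalIntegrable_of_memLp hf)
    (intervalIntegrable_of_memLp hg)] using (((hasSum_sq_fourierCoeffOn hab (hf.add hg)).sub
      (hasSum_sq_fourierCoeffOn hab hf)).sub (hasSum_sq_fourierCoeffOn hab hg)).mul_left 2⁻¹

lemma abs_integral_inner_le_of_norm_fourierCoeffOn_mul_le (hab : a < b) {f g p q : ℝ → ℂ}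
    (hf : MemLp f 2 (volume.restrict (Ioc a b))) (hg : MemLp g 2 (volume.restrict (Ioc a b)))
    (hp : MemLp p 2 (volume.restrict (Ioc a b))) (hq : MemLp q 2 (volume.restrict (Ioc a b)))
    (hle : ∀ k, ‖fourierCoeffOn hab f k‖ * ‖fourierCoeffOn hab g k‖
      ≤ ‖fourierCoeffOn hab p k‖ * ‖fourierCoeffOn hab q k‖) :
    |∫ x in a..b, ⟪f x, g x⟫_ℝ| ≤ √(∫ x in a..b, ‖p x‖ ^ 2) * √(∫ x in a..b, ‖q x‖ ^ 2) := by
  have hlen : 0 < b - a := sub_pos.2 hab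
  have sq_sum {h : ℝ → ℂ} (hh : MemLp h 2 (volume.restrict (Ioc a b))) :
      HasSum (fun k => ‖fourierCoeffOn hab h k‖ ^ (2 : ℝ))
        (√((b - a)⁻¹ * ∫ x in a..b, ‖h x‖ ^ 2) ^ (2 : ℝ)) := by
    have hnonneg : 0 ≤ ∫ x in a..b, ‖h x‖ ^ 2 :=
      intervalIntegral.integral_nonneg hab.le fun x _ => sq_nonneg _
    simpa only [Real.rpow_two, Real.sq_sqrt (mul_nonneg (inv_pos.2 hlen).le hnonneg), smul_eq_mul]
      using hasSum_sq_fourierCoeffOn hab hh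
  obtain ⟨C, -, hC_le, hC⟩ := Real.inner_le_Lp_mul_Lq_hasSum_of_nonneg .two_two
    (Real.sqrt_nonneg _) (Real.sqrt_nonneg _) (fun k => norm_nonneg (fourierCoeffOn hab p k))
    (fun k => norm_nonneg (fourierCoeffOn hab q k)) (sq_sum hp) (sq_sum hq)
  have hinner := hasSum_inner_fourierCoeffOn hab hf hg
  have habs_le : |(b - a)⁻¹ * ∫ x in a..b, ⟪f x, g x⟫_ℝ| ≤ C := by
    rw [← hinner.tsum_eq, ← Real.norm_eq_abs]
    exact tsum_of_norm_bounded hC fun k => (norm_inner_le_norm _ _).trans (hle k)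
  rw [abs_mul, abs_of_pos (inv_pos.2 hlen)] at habs_le
  refine le_of_mul_le_mul_left (habs_le.trans (hC_le.trans_eq ?_)) (inv_pos.2 hlen)
  rw [Real.sqrt_mul (inv_pos.2 hlen).le, Real.sqrt_mul (inv_pos.2 hlen).le, mul_mul_mul_comm,
    Real.mul_self_sqrt (inv_pos.2 hlen).le]

end Parseval

section Periodic

lemma periodic_iteratedDeriv {E : Type*} [NormedAddCommGroup E] [NormedSpace ℝ E] {f : ℝ → E}
    {T : ℝ} (hf : Periodic f T) (n : ℕ) :
    Periodic (iteratedDeriv n f) T := fun x => by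
  rw [← congrFun (iteratedDeriv_comp_add_const n f T) x, funext hf]

variable {a b : ℝ}

lemma eq_endpoints_of_periodic_sub {E : Type*} {f : ℝ → E} (hf : Periodic f (b - a)) :
    f b = f a := by
  simpa using hf a

lemma fourierCoeffOn_deriv_of_eq_endpoints (hab : a < b) {f f' : ℝ → ℂ}
    (hf : ∀ x ∈ uIcc a b, HasDerivAt f (f' x) x) (hf' : IntervalIntegrable f' volume a b)
    (hends : f b = f a) (k : ℤ) :
    fourierCoeffOn hab f' k
      = 2 * Real.pi * Complex.I * k / (b - a) * fourierCoeffOn hab f k := by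
  rcases eq_or_ne k 0 with rfl | hk
  · simp [fourierCoeffOn_eq_integral, intervalIntegral.integral_eq_sub_of_hasDerivAt hf hf', hends]
  · have hlen : (b - a : ℂ) ≠ 0 := by exact_mod_cast (sub_pos.2 hab).ne'
    have hk' : (k : ℂ) ≠ 0 := by exact_mod_cast hk
    have hpi : (Real.pi : ℂ) ≠ 0 := by exact_mod_cast Real.pi_ne_zero
    rw [fourierCoeffOn_of_hasDerivAt hab hk hf hf', hends]
    field_simp
    ring

lemma fourierCoeffOn_iteratedDeriv_of_periodic (hab : a < b) {f : ℝ → ℝ} {n : ℕ}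
    (hf : ContDiff ℝ n f) (hper : Periodic f (b - a)) (k : ℤ) :
    fourierCoeffOn hab (fun x => ((iteratedDeriv n f x : ℝ) : ℂ)) k
      = (2 * Real.pi * Complex.I * k / (b - a)) ^ n
        * fourierCoeffOn hab (fun x => (f x : ℂ)) k := by
  induction n with
  | zero => simp
  | succ n ih =>
    have hderiv (x : ℝ) : HasDerivAt (fun y => ((iteratedDeriv n f y : ℝ) : ℂ))
        ((iteratedDeriv (n + 1) f x : ℝ) : ℂ) x := by
      rw [iteratedDeriv_succ]
      exact (hf.differentiable_iteratedDeriv' n x).hasDerivAt.ofReal_comp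
    have hcont : Continuous fun x => ((iteratedDeriv (n + 1) f x : ℝ) : ℂ) :=
      Complex.continuous_ofReal.comp (hf.continuous_iteratedDeriv' (n + 1))
    have hends : iteratedDeriv n f b = iteratedDeriv n f a :=
      eq_endpoints_of_periodic_sub (periodic_iteratedDeriv hper n)
    rw [fourierCoeffOn_deriv_of_eq_endpoints hab (fun x _ => hderiv x)
      (hcont.intervalIntegrable a b) (congrArg _ hends), ih (hf.of_le (by norm_cast; omega)),
      pow_succ']
    ring

lemma integral_mul_deriv_eq_neg_of_eq_endpoints {f g : ℝ → ℝ} (hf : ContDiff ℝ 1 f)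
    (hg : ContDiff ℝ 1 g) (hf_ends : f b = f a) (hg_ends : g b = g a) :
    ∫ x in a..b, f x * deriv g x = -∫ x in a..b, deriv f x * g x := by
  rw [intervalIntegral.integral_mul_deriv_eq_deriv_mul
    (fun x _ => (hf.differentiable one_ne_zero x).hasDerivAt)
    (fun x _ => (hg.differentiable one_ne_zero x).hasDerivAt)
    (hf.continuous_deriv_one.intervalIntegrable a b)
    (hg.continuous_deriv_one.intervalIntegrable a b), hf_ends, hg_ends]
  ring

lemma integral_mul_iteratedDeriv_two_comm_of_periodic {f g : ℝ → ℝ} (hf : ContDiff ℝ 2 f)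
    (hg : ContDiff ℝ 2 g) (hf_per : Periodic f (b - a)) (hg_per : Periodic g (b - a)) :
    ∫ x in a..b, f x * iteratedDeriv 2 g x = ∫ x in a..b, iteratedDeriv 2 f x * g x := by
  have contDiff_deriv {h : ℝ → ℝ} (hh : ContDiff ℝ 2 h) : ContDiff ℝ 1 (deriv h) :=
    hh.iterate_deriv' 1 1
  have deriv_ends {h : ℝ → ℝ} (hh : Periodic h (b - a)) : deriv h b = deriv h a := by
    simpa using eq_endpoints_of_periodic_sub (periodic_iteratedDeriv hh 1)
  simp only [iteratedDeriv_succ, iteratedDeriv_zero]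
  rw [integral_mul_deriv_eq_neg_of_eq_endpoints (hf.of_le one_le_two) (contDiff_deriv hg)
      (eq_endpoints_of_periodic_sub hf_per) (deriv_ends hg_per),
    integral_mul_deriv_eq_neg_of_eq_endpoints (contDiff_deriv hf) (hg.of_le one_le_two)
      (deriv_ends hf_per) (eq_endpoints_of_periodic_sub hg_per), neg_neg]

end Periodic

section PointwiseBound

variable {a b : ℝ}

lemma integral_abs_mul_le_sqrt_mul_sqrt {X : Type*} [MeasurableSpace X] {μ : Measure X}
    {f g : X → ℝ} (hf : MemLp f 2 μ) (hg : MemLp g 2 μ) :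
    ∫ x, |f x * g x| ∂μ ≤ √(∫ x, f x ^ 2 ∂μ) * √(∫ x, g x ^ 2 ∂μ) := by
  have holder := integral_mul_norm_le_Lp_mul_Lq (f := f) (g := g) (μ := μ) .two_two
    (by simpa using hf) (by simpa using hg)
  simpa [Real.sqrt_eq_rpow, abs_mul] using holder

lemma sq_le_two_mul_sqrt_mul_sqrt_of_eq_zero {g : ℝ → ℝ} (hg : ContDiff ℝ 1 g) {x z : ℝ}
    (hx : x ∈ Icc a b) (hz : z ∈ Icc a b) (hgz : g z = 0) :
    g x ^ 2 ≤ 2 * (√(∫ y in a..b, g y ^ 2) * √(∫ y in a..b, deriv g y ^ 2)) := by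
  have hab : a ≤ b := hx.1.trans hx.2
  have hcont := hg.continuous
  have hcont' := hg.continuous_deriv_one
  have hprod : Continuous fun y => g y * deriv g y := hcont.mul hcont'
  have hsq_eq : g x ^ 2 = 2 * ∫ y in z..x, g y * deriv g y := by
    have hderiv (y : ℝ) : HasDerivAt (fun y => g y ^ 2) (2 * (g y * deriv g y)) y := by
      simpa [mul_assoc] using ((hg.differentiable one_ne_zero y).hasDerivAt.fun_pow 2)
    rw [← intervalIntegral.integral_const_mul, intervalIntegral.integral_eq_sub_of_hasDerivAt
      (fun y _ => hderiv y) ((hprod.const_mul 2).intervalIntegrable z x), hgz]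
    ring
  have hsub : uIoc z x ⊆ uIoc a b := by
    rw [← uIcc_of_le hab] at hx hz
    exact uIoc_subset_uIoc_of_uIcc_subset_uIcc (uIcc_subset_uIcc hz hx)
  rw [hsq_eq]
  gcongr
  calc ∫ y in z..x, g y * deriv g y
      ≤ |∫ y in z..x, ‖g y * deriv g y‖| :=
        (Real.le_norm_self _).trans intervalIntegral.norm_integral_le_abs_integral_norm
    _ ≤ |∫ y in a..b, ‖g y * deriv g y‖| :=
        intervalIntegral.abs_integral_mono_interval hsub (.of_forall fun y => norm_nonneg _)
          (hprod.norm.intervalIntegrable a b)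
    _ = ∫ y in a..b, ‖g y * deriv g y‖ :=
        abs_of_nonneg (intervalIntegral.integral_nonneg hab fun y _ => norm_nonneg _)
    _ ≤ √(∫ y in a..b, g y ^ 2) * √(∫ y in a..b, deriv g y ^ 2) := by
        simp only [intervalIntegral.integral_of_le hab]
        exact integral_abs_mul_le_sqrt_mul_sqrt (memLp_two_restrict_Ioc_of_continuous hcont)
          (memLp_two_restrict_Ioc_of_continuous hcont')

lemma sq_deriv_le_of_eq_endpoints (hab : a < b) {f : ℝ → ℝ} (hf : ContDiff ℝ 2 f)
    (hends : f b = f a) {x : ℝ} (hx : x ∈ Icc a b) :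
    deriv f x ^ 2
      ≤ 2 * (√(∫ y in a..b, deriv f y ^ 2) * √(∫ y in a..b, iteratedDeriv 2 f y ^ 2)) := by
  obtain ⟨z, hz, hfz⟩ := exists_deriv_eq_zero hab hf.continuous.continuousOn hends.symm
  simpa only [iteratedDeriv_succ, iteratedDeriv_zero, iterate_one] using
    sq_le_two_mul_sqrt_mul_sqrt_of_eq_zero (hf.iterate_deriv' 1 1) hx (Ioo_subset_Icc_self hz) hfz

lemma abs_deriv_le_of_eq_endpoints (hab : a < b) {f : ℝ → ℝ} (hf : ContDiff ℝ 2 f)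
    (hends : f b = f a) {ρ₁ ρ₂ : ℝ} (hρ₁ : √(∫ y in a..b, deriv f y ^ 2) ≤ ρ₁)
    (hρ₂ : √(∫ y in a..b, iteratedDeriv 2 f y ^ 2) ≤ ρ₂) {x : ℝ} (hx : x ∈ Icc a b) :
    |deriv f x| ≤ 2 * √ρ₁ * √ρ₂ := by
  have hρ₁_nonneg : 0 ≤ ρ₁ := (Real.sqrt_nonneg _).trans hρ₁
  have hρ₂_nonneg : 0 ≤ ρ₂ := (Real.sqrt_nonneg _).trans hρ₂
  refine abs_le_of_sq_le_sq ?_ (by positivity)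
  calc deriv f x ^ 2 ≤ 2 * (ρ₁ * ρ₂) :=
        (sq_deriv_le_of_eq_endpoints hab hf hends hx).trans (by gcongr)
    _ ≤ 4 * (ρ₁ * ρ₂) := by gcongr; norm_num
    _ = (2 * √ρ₁ * √ρ₂) ^ 2 := by
        rw [mul_pow, mul_pow, Real.sq_sqrt hρ₁_nonneg, Real.sq_sqrt hρ₂_nonneg]
        ring

end PointwiseBound

namespace IsPeriodicHilbertPair

variable {l : ℝ} {hl : 0 < l} {f Hf : ℝ → ℝ}

lemma norm_fourierCoeffOn_le (h : IsPeriodicHilbertPair l hl f Hf) (k : ℤ) :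
    ‖fourierCoeffOn (neg_lt_self hl) (fun x => (Hf x : ℂ)) k‖
      ≤ ‖fourierCoeffOn (neg_lt_self hl) (fun x => (f x : ℂ)) k‖ := by
  have hsign : ‖(Int.sign k : ℂ)‖ ≤ 1 := by
    rcases Int.sign_trichotomy k with hk | hk | hk <;> simp [hk]
  rw [h k, norm_mul, norm_mul, Complex.norm_I, one_mul]
  exact mul_le_of_le_one_left (norm_nonneg _) hsign

lemma abs_integral_mul_le (h : IsPeriodicHilbertPair l hl (iteratedDeriv 3 f) Hf)
    (hHf : Continuous Hf) (hf : ContDiff ℝ 3 f) (hf_per : Periodic f (l - -l)) {g : ℝ → ℝ}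
    (hg : ContDiff ℝ 2 g) (hg_per : Periodic g (l - -l)) :
    |∫ x in -l..l, g x * Hf x|
      ≤ √(∫ x in -l..l, iteratedDeriv 2 g x ^ 2) * √(∫ x in -l..l, deriv f x ^ 2) := by
  have memLp_ofReal {p : ℝ → ℝ} (hp : Continuous p) :
      MemLp (fun x => (p x : ℂ)) 2 (volume.restrict (Ioc (-l) l)) :=
    memLp_two_restrict_Ioc_of_continuous (Complex.continuous_ofReal.comp hp)
  have hf_one : ContDiff ℝ 1 f := hf.of_le (by norm_num)
  have hcoeff (k : ℤ) : ‖fourierCoeffOn (neg_lt_self hl) (fun x => (g x : ℂ)) k‖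
        * ‖fourierCoeffOn (neg_lt_self hl) (fun x => (Hf x : ℂ)) k‖
      ≤ ‖fourierCoeffOn (neg_lt_self hl) (fun x => ((iteratedDeriv 2 g x : ℝ) : ℂ)) k‖
        * ‖fourierCoeffOn (neg_lt_self hl) (fun x => ((iteratedDeriv 1 f x : ℝ) : ℂ)) k‖ := by
    refine (mul_le_mul_of_nonneg_left (h.norm_fourierCoeffOn_le k) (norm_nonneg _)).trans_eq ?_
    rw [fourierCoeffOn_iteratedDeriv_of_periodic _ hf hf_per,
      fourierCoeffOn_iteratedDeriv_of_periodic _ hf_one hf_per,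
      fourierCoeffOn_iteratedDeriv_of_periodic _ hg hg_per]
    simp only [norm_mul, norm_pow]
    ring
  have hbound := abs_integral_inner_le_of_norm_fourierCoeffOn_mul_le (neg_lt_self hl)
    (memLp_ofReal hg.continuous) (memLp_ofReal hHf)
    (memLp_ofReal (hg.continuous_iteratedDeriv' 2))
    (memLp_ofReal (hf_one.continuous_iteratedDeriv' 1)) hcoeff
  simpa [mul_comm] using hbound

lemma neg_two_mul_integral_mul_le (h : IsPeriodicHilbertPair l hl (iteratedDeriv 3 f) Hf) {α : ℝ}
    (hHf : Continuous fun x => α * Hf x) (hf : ContDiff ℝ 3 f) (hf_per : Periodic f (l - -l))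
    {g : ℝ → ℝ} (hg : ContDiff ℝ 2 g) (hg_per : Periodic g (l - -l)) :
    -2 * ∫ x in -l..l, g x * (α * Hf x)
      ≤ 2 * α ^ 2 * (∫ x in -l..l, deriv f x ^ 2)
        + 2⁻¹ * ∫ x in -l..l, iteratedDeriv 2 g x ^ 2 := by
  have integral_sq_nonneg (p : ℝ → ℝ) : 0 ≤ ∫ x in -l..l, p x ^ 2 :=
    intervalIntegral.integral_nonneg (neg_lt_self hl).le fun x _ => sq_nonneg _
  rcases eq_or_ne α 0 with rfl | hα
  · simpa using integral_sq_nonneg (iteratedDeriv 2 g)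
  have hHf_cont : Continuous Hf := (continuous_const_smul_iff₀ hα).1 hHf
  have habs := h.abs_integral_mul_le hHf_cont hf hf_per hg hg_per
  set A := ∫ x in -l..l, iteratedDeriv 2 g x ^ 2
  set B := ∫ x in -l..l, deriv f x ^ 2
  calc -2 * ∫ x in -l..l, g x * (α * Hf x) = -(2 * α) * ∫ x in -l..l, g x * Hf x := by
        simp only [mul_left_comm _ α, intervalIntegral.integral_const_mul]
        ring
    _ ≤ |2 * α| * |∫ x in -l..l, g x * Hf x| := by
        rw [← abs_neg (2 * α), ← abs_mul]
        exact le_abs_self _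
    _ ≤ |2 * α| * (√A * √B) := by gcongr
    _ ≤ 2 * α ^ 2 * √B ^ 2 + 2⁻¹ * √A ^ 2 := by
        rw [abs_mul, abs_two, ← sq_abs α]
        nlinarith [sq_nonneg (2 * |α| * √B - √A)]
    _ = 2 * α ^ 2 * B + 2⁻¹ * A := by
        rw [Real.sq_sqrt (integral_sq_nonneg _), Real.sq_sqrt (integral_sq_nonneg _)]

end IsPeriodicHilbertPair

section EnergyEstimate

variable {a b : ℝ}

lemma integral_mul_iteratedDeriv_four_of_periodic {w : ℝ → ℝ} (hw : ContDiff ℝ 4 w)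
    (hper : Periodic w (b - a)) :
    ∫ x in a..b, w x * iteratedDeriv 4 w x = ∫ x in a..b, iteratedDeriv 2 w x ^ 2 := by
  have hw'' : ContDiff ℝ 2 (iteratedDeriv 2 w) := by
    rw [iteratedDeriv_eq_iterate]
    exact hw.iterate_deriv' 2 2
  have hfour : iteratedDeriv 4 w = iteratedDeriv 2 (iteratedDeriv 2 w) := by
    simp only [iteratedDeriv_succ, iteratedDeriv_zero]
  rw [hfour, integral_mul_iteratedDeriv_two_comm_of_periodic (hw.of_le (by norm_num)) hw'' hper
    (periodic_iteratedDeriv hper 2)]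
  simp only [sq]

lemma neg_two_mul_integral_mul_le_of_continuous (hab : a ≤ b) {f g : ℝ → ℝ} (hf : Continuous f)
    (hg : Continuous g) :
    -2 * ∫ x in a..b, f x * g x ≤ 2 * (∫ x in a..b, f x ^ 2) + 2⁻¹ * ∫ x in a..b, g x ^ 2 := by
  simp only [← intervalIntegral.integral_const_mul]
  rw [← intervalIntegral.integral_add (Continuous.intervalIntegrable (by fun_prop) _ _)
    (Continuous.intervalIntegrable (by fun_prop) _ _)]
  refine intervalIntegral.integral_mono_on hab (Continuous.intervalIntegrable (by fun_prop) _ _)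
    (Continuous.intervalIntegrable (by fun_prop) _ _) fun x _ => ?_
  nlinarith [sq_nonneg (2 * f x + g x)]

lemma integral_sub_mul_burgers_sub_eq {u v : ℝ → ℝ} (hu : ContDiff ℝ 1 u) (hv : ContDiff ℝ 1 v)
    (hu_ends : u b = u a) (hv_ends : v b = v a) :
    ∫ x in a..b, (u x - v x) * (u x * deriv u x - v x * deriv v x)
      = 4⁻¹ * ∫ x in a..b, (u x - v x) ^ 2 * (deriv u x + deriv v x) := by
  have deriv_add (x : ℝ) : deriv (fun y => u y + v y) x = deriv u x + deriv v x :=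
    deriv_fun_add (hu.differentiable one_ne_zero x) (hv.differentiable one_ne_zero x)
  have deriv_sq (x : ℝ) :
      deriv (fun y => (u y - v y) ^ 2) x = 2 * (u x - v x) * (deriv u x - deriv v x) := by
    simpa using (((hu.differentiable one_ne_zero x).hasDerivAt.fun_sub
      (hv.differentiable one_ne_zero x).hasDerivAt).fun_pow 2).deriv
  have hparts := integral_mul_deriv_eq_neg_of_eq_endpoints (a := a) (b := b)
    (f := fun y => (u y - v y) ^ 2) (g := fun y => u y + v y)
    ((hu.sub hv).pow 2) (hu.add hv) (by simp [hu_ends, hv_ends]) (by simp [hu_ends, hv_ends])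
  simp only [deriv_add, deriv_sq] at hparts
  -- `u u' - v v' = ½ ((u - v) (u' + v') + (u + v) (u' - v'))`
  have hsplit : ∫ x in a..b, (u x - v x) * (u x * deriv u x - v x * deriv v x)
      = 2⁻¹ * (∫ x in a..b, (u x - v x) ^ 2 * (deriv u x + deriv v x))
        + 4⁻¹ * ∫ x in a..b, 2 * (u x - v x) * (deriv u x - deriv v x) * (u x + v x) := by
    rw [← intervalIntegral.integral_const_mul, ← intervalIntegral.integral_const_mul,
      ← intervalIntegral.integral_add (Continuous.intervalIntegrable (by fun_prop) _ _)
        (Continuous.intervalIntegrable (by fun_prop) _ _)]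
    refine intervalIntegral.integral_congr fun x _ => ?_
    ring
  linarith

lemma neg_two_mul_integral_sub_mul_burgers_sub_le (hab : a ≤ b) {u v : ℝ → ℝ}
    (hu : ContDiff ℝ 1 u) (hv : ContDiff ℝ 1 v) (hu_ends : u b = u a) (hv_ends : v b = v a)
    {M : ℝ} (hu_le : ∀ x ∈ Icc a b, |deriv u x| ≤ M) (hv_le : ∀ x ∈ Icc a b, |deriv v x| ≤ M) :
    -2 * ∫ x in a..b, (u x - v x) * (u x * deriv u x - v x * deriv v x)
      ≤ M * ∫ x in a..b, (u x - v x) ^ 2 := by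
  rw [integral_sub_mul_burgers_sub_eq hu hv hu_ends hv_ends, ← mul_assoc,
    ← intervalIntegral.integral_const_mul, ← intervalIntegral.integral_const_mul]
  refine intervalIntegral.integral_mono_on hab (Continuous.intervalIntegrable (by fun_prop) _ _)
    (Continuous.intervalIntegrable (by fun_prop) _ _) fun x hx => ?_
  have hu_ge := neg_le_of_abs_le (hu_le x hx)
  have hv_ge := neg_le_of_abs_le (hv_le x hx)
  nlinarith [sq_nonneg (u x - v x)]

-- `q` stands for the time derivative of `u - v` at a fixed time.
lemma integral_sub_mul_add_integral_sq_iteratedDeriv_two_le {l : ℝ} {hl : 0 < l} {α M : ℝ}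
    {u v q Hu3 : ℝ → ℝ}
    (hu : ContDiff ℝ 4 u) (hv : ContDiff ℝ 4 v) (hq : Continuous q)
    (hu_per : Periodic u (l - -l)) (hv_per : Periodic v (l - -l))
    (hHu3 : IsPeriodicHilbertPair l hl (iteratedDeriv 3 u) Hu3)
    (heq : ∀ x, q x + iteratedDeriv 4 (fun y => u y - v y) x
      + iteratedDeriv 2 (fun y => u y - v y) x
      + (u x * deriv u x - v x * deriv v x) + α * Hu3 x = 0)
    (hu_le : ∀ x ∈ Icc (-l) l, |deriv u x| ≤ M) (hv_le : ∀ x ∈ Icc (-l) l, |deriv v x| ≤ M) :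
    (∫ x in -l..l, 2 * (u x - v x) * q x)
        + ∫ x in -l..l, iteratedDeriv 2 (fun y => u y - v y) x ^ 2
      ≤ (2 + M) * (∫ x in -l..l, (u x - v x) ^ 2)
        + 2 * α ^ 2 * ∫ x in -l..l, deriv u x ^ 2 := by
  set w : ℝ → ℝ := fun y => u y - v y
  have hw : ContDiff ℝ 4 w := hu.sub hv
  have hw_per : Periodic w (l - -l) := hu_per.sub hv_per
  have hu_one : ContDiff ℝ 1 u := hu.of_le (by norm_num)
  have hv_one : ContDiff ℝ 1 v := hv.of_le (by norm_num)
  have hw_two : ContDiff ℝ 2 w := hw.of_le (by norm_num)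
  have hw_cont : Continuous w := hw.continuous
  have hw2 := hw_two.continuous_iteratedDeriv' 2
  have hnonlocal_cont : Continuous fun x => α * Hu3 x := by
    simp_rw [fun x => eq_neg_of_add_eq_zero_right (heq x)]
    fun_prop
  have hsplit : ∫ x in -l..l, 2 * w x * q x
      = -2 * (∫ x in -l..l, w x * iteratedDeriv 4 w x)
        + -2 * (∫ x in -l..l, w x * iteratedDeriv 2 w x)
        + -2 * (∫ x in -l..l, w x * (u x * deriv u x - v x * deriv v x))
        + -2 * ∫ x in -l..l, w x * (α * Hu3 x) := by
    simp only [← intervalIntegral.integral_const_mul]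
    have intervalIntegrable {p : ℝ → ℝ} (hp : Continuous p) : IntervalIntegrable p volume (-l) l :=
      hp.intervalIntegrable _ _
    rw [← intervalIntegral.integral_add (intervalIntegrable (by fun_prop))
        (intervalIntegrable (by fun_prop)),
      ← intervalIntegral.integral_add (intervalIntegrable (by fun_prop))
        (intervalIntegrable (by fun_prop)),
      ← intervalIntegral.integral_add (intervalIntegrable (by fun_prop))
        (intervalIntegrable (by fun_prop))]
    refine intervalIntegral.integral_congr fun x _ => ?_
    linear_combination 2 * w x * heq x
  have hdissipation := integral_mul_iteratedDeriv_four_of_periodic hw hw_per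
  have hantidiffusion :=
    neg_two_mul_integral_mul_le_of_continuous (neg_lt_self hl).le hw_cont hw2
  have htransport := neg_two_mul_integral_sub_mul_burgers_sub_le (neg_lt_self hl).le hu_one hv_one
    (eq_endpoints_of_periodic_sub hu_per) (eq_endpoints_of_periodic_sub hv_per) hu_le hv_le
  have hnonlocal := hHu3.neg_two_mul_integral_mul_le hnonlocal_cont (hu.of_le (by norm_num)) hu_per
    hw_two hw_per
  linarith

end EnergyEstimate

theorem nonlocal_ks_differential_inequality_general {l α ρ₁ ρ₂ t : ℝ} {hl : 0 < l}
    {u v : ℝ → ℝ → ℝ} {Hu3 : ℝ → ℝ}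
    (hu : ContDiff ℝ 1 (uncurry u)) (hv : ContDiff ℝ 1 (uncurry v))
    (hu_space : ContDiff ℝ 4 (u t)) (hv_space : ContDiff ℝ 4 (v t))
    (hu_per : Periodic (u t) (2 * l)) (hv_per : Periodic (v t) (2 * l))
    (hHu3 : IsPeriodicHilbertPair l hl (iteratedDeriv 3 (u t)) Hu3)
    (hu_eq : ∀ x, deriv (fun s => u s x) t + iteratedDeriv 4 (u t) x + iteratedDeriv 2 (u t) x
      + u t x * deriv (u t) x + α * Hu3 x = 0)
    (hv_eq : ∀ x, deriv (fun s => v s x) t + iteratedDeriv 4 (v t) x + iteratedDeriv 2 (v t) x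
      + v t x * deriv (v t) x = 0)
    (hu_one : √(∫ x in -l..l, deriv (u t) x ^ 2) ≤ ρ₁)
    (hv_one : √(∫ x in -l..l, deriv (v t) x ^ 2) ≤ ρ₁)
    (hu_two : √(∫ x in -l..l, iteratedDeriv 2 (u t) x ^ 2) ≤ ρ₂)
    (hv_two : √(∫ x in -l..l, iteratedDeriv 2 (v t) x ^ 2) ≤ ρ₂) :
    deriv (fun s => ∫ x in -l..l, (u s x - v s x) ^ 2) t
        + ∫ x in -l..l, iteratedDeriv 2 (fun y => u t y - v t y) x ^ 2
      ≤ (2 + 2 * √ρ₁ * √ρ₂) * (∫ x in -l..l, (u t x - v t x) ^ 2) + 2 * ρ₁ ^ 2 * α ^ 2 := by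
  rw [show 2 * l = l - -l by ring] at hu_per hv_per
  have hw : ContDiff ℝ 1 (uncurry fun s x => u s x - v s x) := hu.sub hv
  have hw_eq (x : ℝ) : deriv (fun s => u s x - v s x) t
      + iteratedDeriv 4 (fun y => u t y - v t y) x + iteratedDeriv 2 (fun y => u t y - v t y) x
      + (u t x * deriv (u t) x - v t x * deriv (v t) x) + α * Hu3 x = 0 := by
    rw [deriv_fun_sub (hasDerivAt_left_of_contDiff_uncurry hu t x).differentiableAt
        (hasDerivAt_left_of_contDiff_uncurry hv t x).differentiableAt,
      iteratedDeriv_fun_sub hu_space.contDiffAt hv_space.contDiffAt,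
      iteratedDeriv_fun_sub (hu_space.of_le (by norm_num)).contDiffAt
        (hv_space.of_le (by norm_num)).contDiffAt]
    linear_combination hu_eq x - hv_eq x
  have hu_le (x : ℝ) (hx : x ∈ Icc (-l) l) : |deriv (u t) x| ≤ 2 * √ρ₁ * √ρ₂ :=
    abs_deriv_le_of_eq_endpoints (neg_lt_self hl) (hu_space.of_le (by norm_num))
      (eq_endpoints_of_periodic_sub hu_per) hu_one hu_two hx
  have hv_le (x : ℝ) (hx : x ∈ Icc (-l) l) : |deriv (v t) x| ≤ 2 * √ρ₁ * √ρ₂ :=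
    abs_deriv_le_of_eq_endpoints (neg_lt_self hl) (hv_space.of_le (by norm_num))
      (eq_endpoints_of_periodic_sub hv_per) hv_one hv_two hx
  have henergy := integral_sub_mul_add_integral_sq_iteratedDeriv_two_le hu_space hv_space
    ((continuous_deriv_left_of_contDiff_uncurry hw).comp (Continuous.prodMk_right t))
    hu_per hv_per hHu3 hw_eq hu_le hv_le
  have hu_sq : ∫ x in -l..l, deriv (u t) x ^ 2 ≤ ρ₁ ^ 2 :=
    (Real.sqrt_le_left ((Real.sqrt_nonneg _).trans hu_one)).1 hu_one
  rw [deriv_integral_sq_of_contDiff_uncurry hw]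
  calc _ ≤ _ := henergy
    _ ≤ (2 + 2 * √ρ₁ * √ρ₂) * (∫ x in -l..l, (u t x - v t x) ^ 2) + 2 * α ^ 2 * ρ₁ ^ 2 := by gcongr
    _ = _ := by ring

/-- **Differential inequality** for the difference `w := u - v` of a solution `u` of the
nonlocal Kuramoto–Sivashinsky equation `u_t + u_{xxxx} + u_{xx} + u u_x + α H(u_{xxx}) = 0`
and a solution `v` of `v_t + v_{xxxx} + v_{xx} + v v_x = 0`, both `2l`-periodic in `x`,
under the uniform bounds `‖u_x‖, ‖v_x‖, ‖w_x‖ ≤ ρ₁` and `‖u_{xx}‖, ‖v_{xx}‖ ≤ ρ₂`: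
with `b₁ := 2 + 4 ρ₁^{1/2} ρ₂^{1/2}` and `b₂ := 2 ρ₁²`, for all `t ≥ 0`,
`d/dt ‖w‖² + ‖w_{xx}‖² ≤ b₁ ‖w‖² + b₂ α²`. -/
theorem nonlocal_ks_differential_inequality
    (l α ρ₁ ρ₂ : ℝ) (hl : 0 < l) (hα0 : 0 ≤ α) (hα1 : α ≤ 1)
    (hρ₁ : 0 ≤ ρ₁) (hρ₂ : 0 ≤ ρ₂)
    (u v Hu3 : ℝ → ℝ → ℝ)
    (hu : ContDiff ℝ (⊤ : ℕ∞) (Function.uncurry u))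
    (hv : ContDiff ℝ (⊤ : ℕ∞) (Function.uncurry v))
    (hup : ∀ t x : ℝ, u t (x + 2 * l) = u t x)
    (hvp : ∀ t x : ℝ, v t (x + 2 * l) = v t x)
    (hHu3p : ∀ t x : ℝ, Hu3 t (x + 2 * l) = Hu3 t x)
    (hHu3 : ∀ t : ℝ, 0 ≤ t → IsPeriodicHilbertPair l hl (iteratedDeriv 3 (u t)) (Hu3 t))
    (hueq : ∀ t : ℝ, 0 ≤ t → ∀ x : ℝ,
      deriv (fun s => u s x) t + iteratedDeriv 4 (u t) x + iteratedDeriv 2 (u t) x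
        + u t x * deriv (u t) x + α * Hu3 t x = 0)
    (hveq : ∀ t : ℝ, 0 ≤ t → ∀ x : ℝ,
      deriv (fun s => v s x) t + iteratedDeriv 4 (v t) x + iteratedDeriv 2 (v t) x
        + v t x * deriv (v t) x = 0)
    (hu1 : ∀ t : ℝ, 0 ≤ t → Real.sqrt (∫ x in (-l)..l, (deriv (u t) x) ^ 2) ≤ ρ₁)
    (hv1 : ∀ t : ℝ, 0 ≤ t → Real.sqrt (∫ x in (-l)..l, (deriv (v t) x) ^ 2) ≤ ρ₁)
    (hu2 : ∀ t : ℝ, 0 ≤ t → Real.sqrt (∫ x in (-l)..l, (iteratedDeriv 2 (u t) x) ^ 2) ≤ ρ₂)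
    (hv2 : ∀ t : ℝ, 0 ≤ t → Real.sqrt (∫ x in (-l)..l, (iteratedDeriv 2 (v t) x) ^ 2) ≤ ρ₂)
    (hw1 : ∀ t : ℝ, 0 ≤ t →
      Real.sqrt (∫ x in (-l)..l, (deriv (fun y => u t y - v t y) x) ^ 2) ≤ ρ₁) :
    ∀ t : ℝ, 0 ≤ t →
      deriv (fun s => ∫ x in (-l)..l, (u s x - v s x) ^ 2) t
        + (∫ x in (-l)..l, (iteratedDeriv 2 (fun y => u t y - v t y) x) ^ 2)
      ≤ (2 + 4 * Real.sqrt ρ₁ * Real.sqrt ρ₂) * (∫ x in (-l)..l, (u t x - v t x) ^ 2)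
        + (2 * ρ₁ ^ 2) * α ^ 2 := by
  intro t ht
  have slice {f : ℝ → ℝ → ℝ} (hf : ContDiff ℝ (⊤ : ℕ∞) (uncurry f)) : ContDiff ℝ 4 (f t) :=
    contDiff_infty.1 (hf.comp (contDiff_prodMk_right t)) 4
  refine (nonlocal_ks_differential_inequality_general (contDiff_infty.1 hu 1)
    (contDiff_infty.1 hv 1) (slice hu) (slice hv) (hup t) (hvp t) (hHu3 t ht)
    (hueq t ht) (hveq t ht) (hu1 t ht) (hv1 t ht) (hu2 t ht) (hv2 t ht)).trans ?_
  gcongr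
  · exact intervalIntegral.integral_nonneg (neg_lt_self hl).le fun x _ => sq_nonneg _
  · norm_num
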